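/- Let (X,G) be a symmetric G-metric space and T: X → X with X T-orbitally complete. Suppose x* ∈ X is such that for any three elements x,y,z of the orbit closure I(x*,T) ∪ {ξ} (where ξ = lim T^n x*, assumed to exist), at least one of conditions (i) G(x,Tx,Tx)+G(y,Ty,Ty)+G(z,Tz,Tz) ≤ α G(x,y,z), 1 ≤ α < 3; (ii) the sum ≤ β[G(Tx,y,z)+G(x,Ty,z)+G(x,y,Tz)], 1/2 ≤ β < 1; (iii) G(Tx,Ty,Tz) ≤ δ max{G(x,y,z), G(x,Tx,Tx), G(y,Ty,Ty), G(z,Tz,Tz), (1/4)[G(Tx,y,z)+G(x,Ty,z)+G(x,y,Tz)]}, 0 ≤ δ < 1/2, holds for the triples (T^n x*, ξ, ξ). If additionally d_n = G(T^n x*, T^{n+1} x*, T^{n+1} x*) → 0 and T^n x* → ξ, then T ξ = ξ. -/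

import Mathlib

open Filter Topology Function

structure GMetricSpace (X : Type*) where
  G : X → X → X → ℝ
  nonneg : ∀ x y z, 0 ≤ G x y z
  eq_zero_iff : ∀ x y z, G x y z = 0 ↔ x = y ∧ y = z
  le_of_ne : ∀ x y z, z ≠ y → G x x y ≤ G x y z
  symm_swap : ∀ x y z, G x y z = G x z y
  symm_cycle : ∀ x y z, G x y z = G y z x
  rect : ∀ x y z a, G x y z ≤ G x a a + G a y z

/-- `(x_n)` G-converges to `x`. -/
def GConv {X : Type*} (g : GMetricSpace X) (s : ℕ → X) (x : X) : Prop :=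
  Tendsto (fun n => g.G x (s n) (s n)) atTop (𝓝 0)

/-- `(x_n)` is a G-Cauchy sequence. -/
def GCauchy {X : Type*} (g : GMetricSpace X) (s : ℕ → X) : Prop :=
  ∀ ε > 0, ∃ N, ∀ m ≥ N, ∀ n ≥ N, g.G (s n) (s m) (s m) < ε

/-- `(X,G)` is a symmetric G-metric space. -/
def GSymmetric {X : Type*} (g : GMetricSpace X) : Prop :=
  ∀ x y, g.G x y y = g.G x x y

/-- `T` is orbitally continuous. -/
def OrbContinuous {X : Type*} (g : GMetricSpace X) (T : X → X) : Prop :=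
  ∀ (x xs : X) (φ : ℕ → ℕ), StrictMono φ →
    GConv g (fun i => T^[φ i] x) xs → GConv g (fun i => T (T^[φ i] x)) (T xs)

/-- `X` is `T`-orbitally complete. -/
def TOrbComplete {X : Type*} (g : GMetricSpace X) (T : X → X) : Prop :=
  ∀ (a : X) (s : ℕ → X), (∀ i, ∃ k, s i = T^[k] a) → GCauchy g s → ∃ u, GConv g s u

theorem stmt_17 {X : Type*} (g : GMetricSpace X) (hsym : GSymmetric g)
    (T : X → X) (xs ξ : X) (hcomp : TOrbComplete g T)
    (α β δ : ℝ) (hα : 1 ≤ α ∧ α < 3) (hβ : 1/2 ≤ β ∧ β < 1) (hδ : 0 ≤ δ ∧ δ < 1/2)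
    (hcond : ∀ n : ℕ,
      (g.G (T^[n] xs) (T (T^[n] xs)) (T (T^[n] xs)) + g.G ξ (T ξ) (T ξ) + g.G ξ (T ξ) (T ξ)
        ≤ α * g.G (T^[n] xs) ξ ξ) ∨
      (g.G (T^[n] xs) (T (T^[n] xs)) (T (T^[n] xs)) + g.G ξ (T ξ) (T ξ) + g.G ξ (T ξ) (T ξ)
        ≤ β * (g.G (T (T^[n] xs)) ξ ξ + g.G (T^[n] xs) (T ξ) ξ + g.G (T^[n] xs) ξ (T ξ))) ∨
      (g.G (T (T^[n] xs)) (T ξ) (T ξ) ≤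
        δ * max (g.G (T^[n] xs) ξ ξ)
          (max (g.G (T^[n] xs) (T (T^[n] xs)) (T (T^[n] xs)))
            (max (g.G ξ (T ξ) (T ξ))
              (max (g.G ξ (T ξ) (T ξ))
                (1/4 * (g.G (T (T^[n] xs)) ξ ξ + g.G (T^[n] xs) (T ξ) ξ +
                  g.G (T^[n] xs) ξ (T ξ))))))))
    (hd : Tendsto (fun n : ℕ => g.G (T^[n] xs) (T^[n + 1] xs) (T^[n + 1] xs)) atTop (𝓝 0))
    (hconv : GConv g (fun n => T^[n] xs) ξ) :
    T ξ = ξ := by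
  obtain ⟨hα1, hα2⟩ := hα
  obtain ⟨hβ1, hβ2⟩ := hβ
  obtain ⟨hδ1, hδ2⟩ := hδ
  unfold GConv at hconv
  have hconv' := hconv.comp (tendsto_add_atTop_nat 1)
  have hlim := (((hconv.add hconv').add hd).const_mul 4)
  have hsw : ∀ x y, g.G x y y = g.G y x x := by
    intro x y
    rw [hsym x y, ← g.symm_cycle y x x]
  have hD0 := g.nonneg ξ (T ξ) (T ξ)
  have key : ∀ n : ℕ, (1 - β) * g.G ξ (T ξ) (T ξ) ≤
      4 * (g.G ξ (T^[n] xs) (T^[n] xs) + g.G ξ (T^[n+1] xs) (T^[n+1] xs)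
        + g.G (T^[n] xs) (T^[n + 1] xs) (T^[n + 1] xs)) := by
    intro n
    have h := hcond n
    rw [← iterate_succ_apply' T n xs] at h
    rw [← g.symm_swap (T^[n] xs) ξ (T ξ), hsw (T^[n] xs) ξ, hsw (T^[n.succ] xs) ξ] at h
    have h1 := g.rect (T^[n] xs) ξ (T ξ) ξ
    rw [hsw (T^[n] xs) ξ, ← hsym ξ (T ξ)] at h1
    have h2 := g.rect ξ (T ξ) (T ξ) (T^[n+1] xs)
    have ha := g.nonneg ξ (T^[n] xs) (T^[n] xs)
    have ha' := g.nonneg ξ (T^[n+1] xs) (T^[n+1] xs)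
    have hdn := g.nonneg (T^[n] xs) (T^[n + 1] xs) (T^[n + 1] xs)
    simp only [Nat.succ_eq_add_one] at h
    generalize g.G ξ (T ξ) (T ξ) = D at *
    generalize g.G ξ (T^[n] xs) (T^[n] xs) = a at *
    generalize g.G ξ (T^[n+1] xs) (T^[n+1] xs) = b at *
    generalize g.G (T^[n] xs) (T^[n + 1] xs) (T^[n + 1] xs) = d at *
    generalize g.G (T^[n] xs) ξ (T ξ) = e at *
    generalize g.G (T^[n+1] xs) (T ξ) (T ξ) = f at *
    have hc : (1 - β) * D ≤ 1 / 2 * D := mul_le_mul_of_nonneg_right (by linarith) hD0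
    rcases h with h | h | h
    · have : α * a ≤ 3 * a := mul_le_mul_of_nonneg_right hα2.le ha
      linarith
    · have h3 : β * (b + e + e) ≤ β * (b + 2 * a + 2 * D) :=
        mul_le_mul_of_nonneg_left (by linarith) (by linarith)
      have h4 : β * (b + 2 * a) ≤ 1 * (b + 2 * a) :=
        mul_le_mul_of_nonneg_right hβ2.le (by linarith)
      linarith
    · have hm : max a (max d (max D (max D (1/4 * (b + e + e))))) ≤ a + b + d + D := by
        refine max_le ?_ (max_le ?_ (max_le ?_ (max_le ?_ ?_))) <;> linarith
      have h3 := mul_le_mul_of_nonneg_left hm hδ1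
      have h4 : δ * (a + b + d + D) ≤ 1 / 2 * (a + b + d + D) :=
        mul_le_mul_of_nonneg_right hδ2.le (by linarith)
      linarith
  have hle := ge_of_tendsto' hlim key
  have hD : g.G ξ (T ξ) (T ξ) = 0 := by
    have : 0 < 1 - β := by linarith
    nlinarith
  exact ((g.eq_zero_iff _ _ _).1 hD).1.symm
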